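/- Let χ : K^× → ℤ/2ℤ be a group homomorphism and n ≥ 1 an integer such that χ vanishes on U_{n+1} and χ(π) = 0. Let t ∈ 𝔬^× be a unit with χ(t) = 0 and χ(1 + tπⁿ) = 1. Then x := t⁻¹π⁻ⁿ satisfies χ(x) = 0, χ(x − e₁) = 1, and χ(x − e₂) = 1; in particular x ∉ {0, e₁, e₂} and χ(x(x−e₁)(x−e₂)) = 0. -/

import Mathlib

/-- An additively written, normalized (i.e. surjective onto `ℤ`) discrete
valuation on a field `K`.  All axioms are imposed at nonzero arguments only,
so the value of `v` at `0` is irrelevant.  For a finite extension `K` of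
`ℚ_[p]`, the normalized valuation `v : K^× → ℤ` of the paper is such a
structure. -/
structure DValuation (K : Type*) [Field K] where
  /-- the valuation map -/
  v : K → ℤ
  v_mul : ∀ ⦃x y : K⦄, x ≠ 0 → y ≠ 0 → v (x * y) = v x + v y
  min_le_v_add : ∀ ⦃x y : K⦄, x ≠ 0 → y ≠ 0 → x + y ≠ 0 → min (v x) (v y) ≤ v (x + y)
  v_surj : ∀ m : ℤ, ∃ x : K, x ≠ 0 ∧ v x = m

namespace DValuation

variable {K : Type*} [Field K] (w : DValuation K)

/-- `u ∈ U_m` : `u` is (a unit) congruent to `1` modulo `𝔭^m`; for `m ≥ 1`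
this forces `v u = 0`, i.e. `u ∈ 𝔬^×`. -/
def IsUnit₁ (m : ℤ) (u : K) : Prop :=
  u = 1 ∨ m ≤ w.v (u - 1)

end DValuation

/-!
Put `y = t * π ^ n`, so that `x = y⁻¹`. Then `x - e = x * (1 + y) * u` with
`u = (1 - e * y) / (1 + y)`, and `u - 1 = -(y * (1 + e)) / (1 + y)`. In residue characteristic `2`
the sum `1 + e = 2 + (e - 1)` has valuation less than `1` for every `1`-unit `e`, so
`v (u - 1) < v y` and `χ u = 0`. Hence `χ (x - e) = χ x + χ (1 + y)`, where `χ x = 0`.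

Over a finite extension of `ℚ₂` the residue characteristic is `2`: otherwise the valuation would be
trivial on `ℚ₂`, and a uniformizer would be transcendental.
-/

open WithZero

section AdditiveCharacter

variable {M A : Type*} [AddMonoid A] {χ : M → A}

theorem apply_pow_of_apply_mul [MonoidWithZero M] [NoZeroDivisors M]
    (hχ : ∀ ⦃x y : M⦄, x ≠ 0 → y ≠ 0 → χ (x * y) = χ x + χ y) (hχ1 : χ 1 = 0)
    {x : M} (hx : x ≠ 0) (n : ℕ) : χ (x ^ n) = n • χ x := by
  induction n with
  | zero => rw [pow_zero, hχ1, zero_nsmul]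
  | succ n ih => rw [pow_succ, hχ (pow_ne_zero n hx) hx, ih, succ_nsmul]

theorem apply_inv_eq_zero_of_apply_mul [GroupWithZero M]
    (hχ : ∀ ⦃x y : M⦄, x ≠ 0 → y ≠ 0 → χ (x * y) = χ x + χ y) (hχ1 : χ 1 = 0)
    {x : M} (hx : x ≠ 0) (hχx : χ x = 0) : χ x⁻¹ = 0 := by
  have h := hχ (inv_ne_zero hx) hx
  rwa [inv_mul_cancel₀ hx, hχ1, hχx, add_zero, eq_comm] at h

end AdditiveCharacter

section OneUnits

variable {R Γ₀ : Type*} [Ring R] [LinearOrderedCommMonoidWithZero Γ₀] {v : Valuation R Γ₀} {e : R}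

theorem valuation_eq_one_of_sub_one_lt_one (he : v (e - 1) < 1) : v e = 1 := by
  simpa only [add_sub_cancel] using v.map_one_add_of_lt he

theorem valuation_one_add_lt_one (h2 : v 2 < 1) (he : v (e - 1) < 1) : v (1 + e) < 1 := by
  have h : 1 + e = 2 + (e - 1) := by rw [← one_add_one_eq_two, add_assoc, add_sub_cancel]
  exact h ▸ v.map_add_lt h2 he

theorem ne_zero_of_valuation_eq_one [Nontrivial Γ₀] (he : v e = 1) : e ≠ 0 :=
  ne_zero_of_map (f := v) (he ▸ one_ne_zero)

end OneUnits

section ValuedField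

variable {K Γ₀ : Type*} [Field K] [LinearOrderedCommGroupWithZero Γ₀] {v : Valuation K Γ₀}
  {e y : K}

theorem valuation_one_sub_mul_div_one_add_sub_one_lt (h2 : v 2 < 1) (hy0 : y ≠ 0) (hy : v y < 1)
    (he : v (e - 1) < 1) : v ((1 - e * y) / (1 + y) - 1) < v y := by
  have h1y : v (1 + y) = 1 := v.map_one_add_of_lt hy
  have hdiff : (1 - e * y) / (1 + y) - 1 = -(y * (1 + e)) / (1 + y) := by
    have := ne_zero_of_valuation_eq_one h1y
    field_simp
    ring
  calc v ((1 - e * y) / (1 + y) - 1) = v y * v (1 + e) := by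
        rw [hdiff, map_div₀, h1y, div_one, v.map_neg, map_mul]
    _ < v y := mul_lt_of_lt_one_right (v.pos_iff.mpr hy0) (valuation_one_add_lt_one h2 he)

theorem inv_ne_of_valuation_sub_one_lt_one (hy : v y < 1) (he : v (e - 1) < 1) : y⁻¹ ≠ e := by
  rintro rfl
  have h := valuation_eq_one_of_sub_one_lt_one he
  rw [map_inv₀, inv_eq_one] at h
  exact hy.ne h

theorem apply_inv_sub_of_apply_mul {A : Type*} [AddMonoid A] {χ : K → A}
    (hχ : ∀ ⦃x y : K⦄, x ≠ 0 → y ≠ 0 → χ (x * y) = χ x + χ y) (h2 : v 2 < 1)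
    (hy0 : y ≠ 0) (hy : v y < 1) (hvan : ∀ u : K, v (u - 1) < v y → χ u = 0)
    (he : v (e - 1) < 1) : χ (y⁻¹ - e) = χ y⁻¹ + χ (1 + y) := by
  have h1y : 1 + y ≠ 0 := ne_zero_of_valuation_eq_one (v.map_one_add_of_lt hy)
  have hu := valuation_one_sub_mul_div_one_add_sub_one_lt h2 hy0 hy he
  have hu0 : (1 - e * y) / (1 + y) ≠ 0 :=
    ne_zero_of_valuation_eq_one (valuation_eq_one_of_sub_one_lt_one (hu.trans hy))
  have hfactor : y⁻¹ - e = y⁻¹ * (1 + y) * ((1 - e * y) / (1 + y)) := by field_simp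
  rw [hfactor, hχ (mul_ne_zero (inv_ne_zero hy0) h1y) hu0, hχ (inv_ne_zero hy0) h1y,
    hvan _ hu, add_zero]

end ValuedField

namespace DValuation

variable {K : Type*} [Field K] (w : DValuation K)

theorem v_one : w.v 1 = 0 := by
  have h := w.v_mul (one_ne_zero (α := K)) one_ne_zero
  rw [mul_one] at h
  omega

theorem v_pow {x : K} (hx : x ≠ 0) (n : ℕ) : w.v (x ^ n) = n * w.v x := by
  rw [apply_pow_of_apply_mul w.v_mul w.v_one hx, nsmul_eq_mul]

open Classical in
/-- The multiplicatively written valuation `exp (-w.v x)` of `w`, with the value at `0` corrected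
to `0`; it gives access to the library's theory of valuations. -/
noncomputable def toValuation : Valuation K ℤᵐ⁰ where
  toFun x := if x = 0 then 0 else exp (-w.v x)
  map_zero' := if_pos rfl
  map_one' := by rw [if_neg one_ne_zero, w.v_one, neg_zero, exp_zero]
  map_mul' x y := by
    by_cases hx : x = 0
    · simp [hx]
    by_cases hy : y = 0
    · simp [hy]
    rw [if_neg (mul_ne_zero hx hy), if_neg hx, if_neg hy, w.v_mul hx hy, neg_add, exp_add]
  map_add_le_max' x y := by
    by_cases hx : x = 0
    · simp [hx]
    by_cases hy : y = 0
    · simp [hy]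
    by_cases hxy : x + y = 0
    · simp [hxy]
    simp only [hx, hy, hxy, if_false, le_max_iff, exp_le_exp, neg_le_neg_iff]
    exact min_le_iff.mp (w.min_le_v_add hx hy hxy)

theorem toValuation_apply {x : K} (hx : x ≠ 0) : w.toValuation x = exp (-w.v x) :=
  if_neg hx

theorem toValuation_eq_one_iff {x : K} (hx : x ≠ 0) : w.toValuation x = 1 ↔ w.v x = 0 := by
  rw [w.toValuation_apply hx, exp_eq_one, neg_eq_zero]

theorem toValuation_lt_one_iff {x : K} (hx : x ≠ 0) : w.toValuation x < 1 ↔ 0 < w.v x := by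
  rw [w.toValuation_apply hx, ← exp_zero, exp_lt_exp, neg_lt_zero]

theorem isUnit₁_v_add_one_iff {u y : K} (hy : y ≠ 0) :
    w.IsUnit₁ (w.v y + 1) u ↔ w.toValuation (u - 1) < w.toValuation y := by
  rcases eq_or_ne u 1 with rfl | hu
  · simp [IsUnit₁, w.toValuation_apply hy]
  · rw [w.toValuation_apply hy, w.toValuation_apply (sub_ne_zero.mpr hu), exp_lt_exp,
      neg_lt_neg_iff, Int.lt_iff_add_one_le, IsUnit₁, or_iff_right hu]

theorem isUnit₁_one_iff {u : K} : w.IsUnit₁ 1 u ↔ w.toValuation (u - 1) < 1 := by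
  simpa only [w.v_one, zero_add, map_one] using w.isUnit₁_v_add_one_iff (u := u) one_ne_zero

theorem isUnit₁_natCast_add_one_iff {u π : K} (hπ0 : π ≠ 0) (hπ : w.v π = 1) (n : ℕ) :
    w.IsUnit₁ (n + 1) u ↔ w.toValuation (u - 1) < w.toValuation π ^ n := by
  simpa only [w.v_pow hπ0, hπ, mul_one, map_pow] using
    w.isUnit₁_v_add_one_iff (u := u) (pow_ne_zero n hπ0)

theorem toValuation_natCast_lt_one_of_isAlgebraic {p : ℕ} [Fact p.Prime] [Algebra ℚ_[p] K]
    [Algebra.IsAlgebraic ℚ_[p] K] {c : ℤ}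
    (hext : ∀ x : ℚ_[p], x ≠ 0 → w.v (algebraMap ℚ_[p] K x) = c * x.valuation) :
    w.toValuation (p : K) < 1 := by
  have hle : w.toValuation (p : K) ≤ 1 := natCast_mem w.toValuation.integer p
  refine hle.lt_of_ne fun hp => ?_
  have hp0 : (p : ℚ_[p]) ≠ 0 := NeZero.ne _
  have hc : c = 0 := by
    have h := hext p hp0
    rwa [map_natCast, (w.toValuation_eq_one_iff (ne_zero_of_valuation_eq_one hp)).mp hp,
      Padic.valuation_p, mul_one, eq_comm] at h
  have htrivial : w.toValuation.IsTrivialOn ℚ_[p] := ⟨fun a ha => by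
    rw [w.toValuation_eq_one_iff ((map_ne_zero _).mpr ha), hext a ha, hc, zero_mul]⟩
  obtain ⟨π, hπ0, hπ⟩ := w.v_surj 1
  have hπ1 : w.toValuation π ≠ 1 := fun h =>
    one_ne_zero (hπ.symm.trans ((w.toValuation_eq_one_iff hπ0).mp h))
  exact w.toValuation.transcendental_of_ne_one ℚ_[p] π hπ0 hπ1
    (Algebra.IsAlgebraic.isAlgebraic π)

end DValuation

theorem chatelet_class_zero_one_general {K Γ₀ A : Type*} [Field K]
    [LinearOrderedCommGroupWithZero Γ₀] [AddMonoid A] (v : Valuation K Γ₀) (h2 : v 2 < 1)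
    {π : K} (hπ0 : π ≠ 0) (hπ : v π < 1) {χ : K → A}
    (hχ : ∀ ⦃x y : K⦄, x ≠ 0 → y ≠ 0 → χ (x * y) = χ x + χ y)
    {n : ℕ} (hn : n ≠ 0) (hvan : ∀ u : K, v (u - 1) < v π ^ n → χ u = 0) (hχπ : χ π = 0)
    {e₁ e₂ : K} (he₁ : v (e₁ - 1) < 1) (he₂ : v (e₂ - 1) < 1)
    {t : K} (ht : v t = 1) (hχt : χ t = 0) {c : A} (hc : χ (1 + t * π ^ n) = c)
    {x : K} (hx : x = t⁻¹ * (π ^ n)⁻¹) :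
    χ x = 0 ∧ χ (x - e₁) = c ∧ χ (x - e₂) = c ∧
      x ≠ 0 ∧ x ≠ e₁ ∧ x ≠ e₂ ∧ χ (x * (x - e₁) * (x - e₂)) = c + c := by
  have ht0 : t ≠ 0 := ne_zero_of_valuation_eq_one ht
  have hπn : π ^ n ≠ 0 := pow_ne_zero n hπ0
  rw [← mul_inv] at hx
  have hχ1 : χ 1 = 0 := hvan 1 (by simpa using pow_pos (v.pos_iff.mpr hπ0) n)
  have hχy : χ (t * π ^ n) = 0 := by
    rw [hχ ht0 hπn, hχt, apply_pow_of_apply_mul hχ hχ1 hπ0, hχπ, nsmul_zero, add_zero]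
  have hvy : v (t * π ^ n) = v π ^ n := by rw [map_mul, ht, one_mul, map_pow]
  have hvy1 : v (t * π ^ n) < 1 := hvy ▸ pow_lt_one₀ zero_le hπ hn
  have hy0 := mul_ne_zero ht0 hπn
  have hχx : χ x = 0 := hx ▸ apply_inv_eq_zero_of_apply_mul hχ hχ1 hy0 hχy
  have hχ_sub {e : K} (he : v (e - 1) < 1) : χ (x - e) = c := by
    rw [hx, apply_inv_sub_of_apply_mul hχ h2 hy0 hvy1 (hvy ▸ hvan) he, ← hx, hχx, hc, zero_add]
  have hne {e : K} (he : v (e - 1) < 1) : x ≠ e :=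
    hx ▸ inv_ne_of_valuation_sub_one_lt_one hvy1 he
  have hx0 : x ≠ 0 := hx ▸ inv_ne_zero hy0
  refine ⟨hχx, hχ_sub he₁, hχ_sub he₂, hx0, hne he₁, hne he₂, ?_⟩
  have hx₁ := sub_ne_zero.mpr (hne he₁)
  rw [hχ (mul_ne_zero hx0 hx₁) (sub_ne_zero.mpr (hne he₂)), hχ hx0 hx₁, hχx, zero_add,
    hχ_sub he₁, hχ_sub he₂]

/-- The element `x = t⁻¹π⁻ⁿ` always produces the class `(0,1)`:
`χ : K^× → ℤ/2ℤ` a homomorphism vanishing on `U_{n+1}` (`n ≥ 1`) with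
`χ(π) = 0`, and `t` a unit with `χ(t) = 0` and `χ(1 + tπⁿ) = 1`.  Then
`x = t⁻¹π⁻ⁿ` satisfies `χ(x) = 0`, `χ(x−e₁) = 1` and `χ(x−e₂) = 1`; in
particular `x ∉ {0, e₁, e₂}` and `χ(x(x−e₁)(x−e₂)) = 0`. -/
theorem chatelet_class_zero_one
    (K : Type*) [Field K] [Algebra ℚ_[2] K] [FiniteDimensional ℚ_[2] K]
    (w : DValuation K)
    (hext : ∀ x : ℚ_[2], x ≠ 0 →
      w.v (algebraMap ℚ_[2] K x) = w.v (algebraMap ℚ_[2] K 2) * x.valuation)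
    (π : K) (hπ0 : π ≠ 0) (hπ : w.v π = 1)
    (χ : K → ZMod 2)
    (hχ : ∀ ⦃x y : K⦄, x ≠ 0 → y ≠ 0 → χ (x * y) = χ x + χ y)
    (n : ℕ) (hn : 1 ≤ n)
    (hvan : ∀ u : K, w.IsUnit₁ ((n : ℤ) + 1) u → χ u = 0)
    (hχπ : χ π = 0)
    (e₁ e₂ : K) (he₁ : w.IsUnit₁ 1 e₁) (he₂ : w.IsUnit₁ 1 e₂) (hee : e₁ ≠ e₂)
    (t : K) (ht0 : t ≠ 0) (htu : w.v t = 0)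
    (hχt : χ t = 0) (hχtπ : χ (1 + t * π ^ n) = 1)
    (x : K) (hx : x = t⁻¹ * (π ^ n)⁻¹) :
    χ x = 0 ∧ χ (x - e₁) = 1 ∧ χ (x - e₂) = 1 ∧
      x ≠ 0 ∧ x ≠ e₁ ∧ x ≠ e₂ ∧ χ (x * (x - e₁) * (x - e₂)) = 0 := by
  have h2 : w.toValuation 2 < 1 := mod_cast w.toValuation_natCast_lt_one_of_isAlgebraic hext
  -- The last component ends in `c + c = 1 + 1`, which reduces to `0` in `ZMod 2`.
  exact chatelet_class_zero_one_general w.toValuation h2 hπ0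
    ((w.toValuation_lt_one_iff hπ0).mpr (hπ ▸ one_pos)) hχ (Nat.one_le_iff_ne_zero.mp hn)
    (fun u hu => hvan u ((w.isUnit₁_natCast_add_one_iff hπ0 hπ n).mpr hu)) hχπ
    (w.isUnit₁_one_iff.mp he₁) (w.isUnit₁_one_iff.mp he₂)
    ((w.toValuation_eq_one_iff ht0).mpr htu) hχt hχtπ hx
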